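/- Let K be a ℤ-graded module over a field k of characteristic zero and let δ be a graded endomorphism of K of odd degree d with δ∘δ = 0. Define the derived bracket of the graded commutator by [F,G]_δ := [[F,δ],G], where [F,G] = F∘G − (−1)^{|F||G|} G∘F is the graded commutator. Then for all homogeneous graded endomorphisms F, G, H of K: (i) [F,[G,H]_δ]_δ = [[F,G]_δ,H]_δ + (−1)^{(|F|+d)(|G|+d)}[G,[F,H]_δ]_δ, and (ii) [F, G∘H]_δ = [F,G]_δ∘H + (−1)^{(|F|+d)|G|} G∘[F,H]_δ; that is, the derived bracket of the graded commutator with respect to δ is a Leibniz bracket of degree d. -/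

import Mathlib

/-- `F` is a graded endomorphism of degree `d` with respect to the grading `𝒜`. -/
def IsGradedEnd {k K : Type*} [Field k] [AddCommGroup K] [Module k K]
    (𝒜 : ℤ → Submodule k K) (F : Module.End k K) (d : ℤ) : Prop :=
  ∀ i : ℤ, (𝒜 i).map F ≤ 𝒜 (i + d)

/-- The graded commutator `[x,y] = x*y - (-1)^{i j} y*x` of elements `x, y`
of degrees `i, j` in an associative ring. -/
def gcomm {A : Type*} [Ring A] (x y : A) (i j : ℤ) : A :=
  x * y - ((Int.negOnePow (i * j)) : ℤ) • (y * x)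

/-!
Graded commutation with a fixed element is a derivation of the product, and hence also of the
graded commutator. For `δ` odd with `δ * δ = 0`, write `Dx = [x, δ]`. Then `D(Dx) = 0`, so the
derivation property of `[Dx, -]` applied to `Dy = [y, δ]` gives `[Dx, Dy] = D[Dx, y]`.
Substituting this into the graded Jacobi identity for `Dx`, `Dy`, `z` turns it into the Jacobi
identity for the derived bracket `[x, y]_δ = [Dx, y]`.
-/

section Ring

variable {A : Type*} [Ring A]

theorem gcomm_sub_right (x y z : A) (i j : ℤ) :
    gcomm x (y - z) i j = gcomm x y i j - gcomm x z i j := by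
  simp only [gcomm, mul_sub, sub_mul, smul_sub]
  abel

theorem gcomm_zsmul_right (n : ℤ) (x y : A) (i j : ℤ) :
    gcomm x (n • y) i j = n • gcomm x y i j := by
  simp only [gcomm, mul_smul_comm, smul_mul_assoc, smul_sub, smul_comm n]

theorem gcomm_mul_right (x y z : A) (i j l : ℤ) :
    gcomm x (y * z) i (j + l) =
      gcomm x y i j * z + ((i * j).negOnePow : ℤ) • (y * gcomm x z i l) := by
  simp only [gcomm, mul_add, Int.negOnePow_add, Units.val_mul, mul_smul, sub_mul, mul_sub,
    smul_sub, smul_mul_assoc, mul_smul_comm, mul_assoc]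
  abel

theorem gcomm_jacobi (x y z : A) (i j l : ℤ) :
    gcomm x (gcomm y z j l) i (j + l) =
      gcomm (gcomm x y i j) z (i + j) l +
        ((i * j).negOnePow : ℤ) • gcomm y (gcomm x z i l) j (i + l) := by
  have sign_cancel (a : A) :
      ((i * j).negOnePow : ℤ) • ((j * (i + l)).negOnePow : ℤ) • a =
        ((j * l).negOnePow : ℤ) • a := by
    rw [smul_smul, ← Units.val_mul, ← Int.negOnePow_add,
      show i * j + j * (i + l) = 2 * (i * j) + j * l by ring, Int.negOnePow_add,
      Int.negOnePow_two_mul, one_mul]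
  have sign_split (a : A) :
      (((i + j) * l).negOnePow : ℤ) • a =
        ((j * l).negOnePow : ℤ) • ((i * l).negOnePow : ℤ) • a := by
    rw [smul_smul, ← Units.val_mul, ← Int.negOnePow_add, add_mul, add_comm (j * l)]
  calc
    gcomm x (gcomm y z j l) i (j + l)
      = gcomm x (y * z) i (j + l) -
          ((j * l).negOnePow : ℤ) • gcomm x (z * y) i (l + j) := by
        rw [gcomm.eq_def y z, gcomm_sub_right, gcomm_zsmul_right, add_comm l j]
    _ = gcomm x y i j * z + ((i * j).negOnePow : ℤ) • (y * gcomm x z i l) -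
          ((j * l).negOnePow : ℤ) •
            (gcomm x z i l * y + ((i * l).negOnePow : ℤ) • (z * gcomm x y i j)) := by
        rw [gcomm_mul_right, gcomm_mul_right]
    _ = gcomm (gcomm x y i j) z (i + j) l +
          ((i * j).negOnePow : ℤ) • gcomm y (gcomm x z i l) j (i + l) := by
        rw [gcomm.eq_def (gcomm x y i j) z, gcomm.eq_def y (gcomm x z i l), smul_sub,
          sign_cancel, sign_split, smul_add]
        abel

/-- The derived bracket `[x, y]_δ = [[x, δ], y]` of the graded commutator, for `δ` of degree `d`.
As for `gcomm`, the degrees `i` of `x` and `j` of `y` are passed explicitly and only enter through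
signs; the bracket itself has degree `i + d + j`. -/
def derivedBracket (δ : A) (d : ℤ) (x y : A) (i j : ℤ) : A :=
  gcomm (gcomm x δ i d) y (i + d) j

variable {δ : A} {d : ℤ}

theorem gcomm_gcomm_self_of_odd_of_mul_self_eq_zero (hd : Odd d) (hδ : δ * δ = 0)
    (x : A) (i : ℤ) : gcomm (gcomm x δ i d) δ (i + d) d = 0 := by
  have sign : (((i + d) * d).negOnePow : ℤ) = -((i * d).negOnePow : ℤ) := by
    rw [add_mul, Int.negOnePow_add, Int.negOnePow_odd (d * d) (hd.mul hd), mul_neg_one,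
      Units.val_neg]
  have right_mul : gcomm x δ i d * δ = -(((i * d).negOnePow : ℤ) • (δ * x * δ)) := by
    rw [gcomm, sub_mul, mul_assoc, hδ, mul_zero, zero_sub, smul_mul_assoc]
  have left_mul : δ * gcomm x δ i d = δ * x * δ := by
    rw [gcomm, mul_sub, mul_smul_comm, ← mul_assoc δ δ, hδ, zero_mul, smul_zero, sub_zero,
      mul_assoc]
  rw [gcomm, right_mul, left_mul, sign, neg_smul, sub_self]

theorem gcomm_derivedBracket_self (hd : Odd d) (hδ : δ * δ = 0) (x y : A) (i j : ℤ) :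
    gcomm (derivedBracket δ d x y i j) δ (i + d + j) d =
      gcomm (gcomm x δ i d) (gcomm y δ j d) (i + d) (j + d) := by
  have gcomm_zero : gcomm y 0 j (i + d + d) = 0 := by
    simp only [gcomm, mul_zero, zero_mul, smul_zero, sub_zero]
  rw [gcomm_jacobi, gcomm_gcomm_self_of_odd_of_mul_self_eq_zero hd hδ, gcomm_zero, smul_zero,
    add_zero, derivedBracket]

theorem derivedBracket_jacobi (hd : Odd d) (hδ : δ * δ = 0) (x y z : A) (i j l : ℤ) :
    derivedBracket δ d x (derivedBracket δ d y z j l) i (j + d + l) =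
      derivedBracket δ d (derivedBracket δ d x y i j) z (i + d + j) l +
        (((i + d) * (j + d)).negOnePow : ℤ) •
          derivedBracket δ d y (derivedBracket δ d x z i l) j (i + d + l) := by
  rw [derivedBracket.eq_def δ d (derivedBracket δ d x y i j), gcomm_derivedBracket_self hd hδ,
    add_assoc (i + d) j d]
  exact gcomm_jacobi (gcomm x δ i d) (gcomm y δ j d) z (i + d) (j + d) l

theorem derivedBracket_mul_right (δ : A) (d : ℤ) (x y z : A) (i j l : ℤ) :
    derivedBracket δ d x (y * z) i (j + l) =
      derivedBracket δ d x y i j * z +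
        (((i + d) * j).negOnePow : ℤ) • (y * derivedBracket δ d x z i l) :=
  gcomm_mul_right (gcomm x δ i d) y z (i + d) j l

theorem derived_bracket_of_commutator_is_leibniz_general (hd : Odd d) (hδ : δ * δ = 0) :
    (∀ x y z : A, ∀ i j l : ℤ,
      derivedBracket δ d x (derivedBracket δ d y z j l) i (j + d + l) =
        derivedBracket δ d (derivedBracket δ d x y i j) z (i + d + j) l +
          (((i + d) * (j + d)).negOnePow : ℤ) •
            derivedBracket δ d y (derivedBracket δ d x z i l) j (i + d + l)) ∧
    (∀ x y z : A, ∀ i j l : ℤ,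
      derivedBracket δ d x (y * z) i (j + l) =
        derivedBracket δ d x y i j * z +
          (((i + d) * j).negOnePow : ℤ) • (y * derivedBracket δ d x z i l)) :=
  ⟨derivedBracket_jacobi hd hδ, derivedBracket_mul_right δ d⟩

end Ring

/-- for a square-zero graded endomorphism `δ` of odd degree `d` of a
ℤ-graded module, the derived bracket `[F,G]_δ = [[F,δ],G]` of the graded commutator
satisfies the graded Jacobi identity and the derivation rule with degree shift `d`,
i.e. it is a Leibniz bracket of degree `d`. -/
theorem derived_bracket_of_commutator_is_leibniz
    (k : Type*) [Field k] [CharZero k]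
    (K : Type*) [AddCommGroup K] [Module k K]
    (𝒜 : ℤ → Submodule k K) (hK : DirectSum.IsInternal 𝒜)
    (δ : Module.End k K) (d : ℤ) (hδ : IsGradedEnd 𝒜 δ d) (hd : Odd d)
    (hδδ : δ * δ = 0) :
    (∀ F G H : Module.End k K, ∀ i j l : ℤ,
      IsGradedEnd 𝒜 F i → IsGradedEnd 𝒜 G j → IsGradedEnd 𝒜 H l →
      gcomm (gcomm F δ i d) (gcomm (gcomm G δ j d) H (j + d) l) (i + d) (j + d + l) =
        gcomm (gcomm (gcomm (gcomm F δ i d) G (i + d) j) δ (i + d + j) d) H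
            (i + d + j + d) l +
          ((Int.negOnePow ((i + d) * (j + d))) : ℤ) •
            gcomm (gcomm G δ j d) (gcomm (gcomm F δ i d) H (i + d) l) (j + d)
              (i + d + l)) ∧
    (∀ F G H : Module.End k K, ∀ i j l : ℤ,
      IsGradedEnd 𝒜 F i → IsGradedEnd 𝒜 G j → IsGradedEnd 𝒜 H l →
      gcomm (gcomm F δ i d) (G * H) (i + d) (j + l) =
        gcomm (gcomm F δ i d) G (i + d) j * H +
          ((Int.negOnePow ((i + d) * j)) : ℤ) •
            (G * gcomm (gcomm F δ i d) H (i + d) l)) :=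
  have ⟨jacobi, derivation⟩ := derived_bracket_of_commutator_is_leibniz_general hd hδδ
  ⟨fun F G H i j l _ _ _ ↦ jacobi F G H i j l,
    fun F G H i j l _ _ _ ↦ derivation F G H i j l⟩
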